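/- arXiv:2512.00270 — 2 statements merged into one kernel-verified Lean document; each statement's English description precedes it below -/
import Mathlib

section
/- Let F : S → G(S) be a Markov chain on a measurable space S, let p : S → {1,…,2d} be a measurable priority function, and let r = (r₁,…,r_{2d}) be a lexicographic progress-measure supermartingale for (F, p), with r_i the block for priority i. Then for each i ∈ {1,…,d}, the truncation (r₁,…,r_{2i−1}) is a lexicographic generalised Streett supermartingale for the Streett pair (S_{≤2i−1}, S_{≤2i−2}), where S_{≤k} = {x ∈ S ∣ p(x) ≤ k}. -/
open MeasureTheory ProbabilityTheory Set
open scoped ENNReal NNReal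

variable {S : Type*} [MeasurableSpace S]

/-- The strict lexicographic supermartingale ordering on `[0,∞]^n`. -/
def lexGT {n : ℕ} (a b : Fin n → ℝ≥0∞) : Prop :=
  ∃ l : Fin n, (∀ i < l, b i ≤ a i) ∧ b l + 1 ≤ a l

/-- The non-strict lexicographic supermartingale ordering on `[0,∞]^n`. -/
def lexGE {n : ℕ} (a b : Fin n → ℝ≥0∞) : Prop :=
  lexGT a b ∨ ∀ i, b i ≤ a i

/-- The nested strict lexicographic ordering `≻⁽²⁾` on blocks. -/
def nlexGT {D : ℕ} {m : Fin D → ℕ} (a b : ∀ i, Fin (m i) → ℝ≥0∞) : Prop :=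
  ∃ l : Fin D, (∀ i < l, lexGE (a i) (b i)) ∧ lexGT (a l) (b l)

/-- The nested non-strict lexicographic ordering `⪰⁽²⁾` on blocks. -/
def nlexGE {D : ℕ} {m : Fin D → ℕ} (a b : ∀ i, Fin (m i) → ℝ≥0∞) : Prop :=
  nlexGT a b ∨ ∀ i, lexGE (a i) (b i)

/-- The truncated nested strict lexicographic ordering `≻⁽²⁾_k`. -/
def nlexGTTrunc {D : ℕ} {m : Fin D → ℕ} (k : ℕ) (a b : ∀ i, Fin (m i) → ℝ≥0∞) : Prop :=
  ∃ l : Fin D, (l : ℕ) < k ∧ (∀ i < l, lexGE (a i) (b i)) ∧ lexGT (a l) (b l)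

/-- The truncated nested non-strict lexicographic ordering `⪰⁽²⁾_k`. -/
def nlexGETrunc {D : ℕ} {m : Fin D → ℕ} (k : ℕ) (a b : ∀ i, Fin (m i) → ℝ≥0∞) : Prop :=
  nlexGTTrunc k a b ∨ ∀ i : Fin D, (i : ℕ) < k → lexGE (a i) (b i)

/-- The next-time operator applied componentwise: `(𝕏 r)(s) = ∫ r dF(s)`. -/
noncomputable def nextTimeN (F : Kernel S S) {D : ℕ} {m : Fin D → ℕ}
    (r : S → ∀ i, Fin (m i) → ℝ≥0∞) : S → ∀ i, Fin (m i) → ℝ≥0∞ :=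
  fun s i k => ∫⁻ y, r y i k ∂(F s)

/-- A lexicographic progress-measure supermartingale (LexPMSM) for `(F, p)`
(priorities `1,…,D`, block `i` of the vector corresponding to priority `i+1`). -/
def IsLexPMSM (F : Kernel S S) (p : S → ℕ) {D : ℕ} {m : Fin D → ℕ}
    (r : S → ∀ i, Fin (m i) → ℝ≥0∞) : Prop :=
  (∀ i k, Measurable fun x => r x i k) ∧ (∀ x i k, r x i k ≠ ⊤) ∧
    (∀ x, Even (p x) → nlexGETrunc (p x) (r x) (nextTimeN F r x)) ∧
    (∀ x, ¬ Even (p x) → nlexGTTrunc (p x) (r x) (nextTimeN F r x))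

/-- A lexicographic generalised Streett supermartingale (LexGSSM), with blocks
viewed via flattening under the nested orderings `≻⁽²⁾` and `⪰⁽²⁾`:
`(𝕏 r)(x) ≺⁽²⁾ r(x)` on `A ∖ B` and `(𝕏 r)(x) ⪯⁽²⁾ r(x)` outside `A ∪ B`. -/
def IsLexGSSMBlocks (F : Kernel S S) (A B : Set S) {D : ℕ} {m : Fin D → ℕ}
    (r : S → ∀ i, Fin (m i) → ℝ≥0∞) : Prop :=
  (∀ i k, Measurable fun x => r x i k) ∧ (∀ x i k, r x i k ≠ ⊤) ∧
    (∀ x ∈ A \ B, nlexGT (r x) (nextTimeN F r x)) ∧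
    (∀ x ∉ A ∪ B, nlexGE (r x) (nextTimeN F r x))

/-- Truncation of a nested vector to its first `k` blocks. -/
def truncVec {D : ℕ} (m : Fin D → ℕ) (k : ℕ) (hk : k ≤ D)
    (v : ∀ j : Fin D, Fin (m j) → ℝ≥0∞) :
    ∀ j : Fin k, Fin (m (Fin.castLE hk j)) → ℝ≥0∞ :=
  fun j => v (Fin.castLE hk j)

/-!
Truncation commutes with the next-time operator, and the orderings on truncated vectors are the
truncated orderings. So everything reduces to comparing truncation levels: a strict decrease at
level `q` is decided by a block `l`, and either `l` survives the truncation to `k` blocks, or all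
`k` remaining blocks lie before `l` and hence decrease weakly.
-/

section Orderings

variable {D : ℕ} {m : Fin D → ℕ} {k q : ℕ} {a b : ∀ i, Fin (m i) → ℝ≥0∞}

theorem nlexGT_truncVec_iff (hk : k ≤ D) :
    nlexGT (truncVec m k hk a) (truncVec m k hk b) ↔ nlexGTTrunc k a b := by
  constructor
  · rintro ⟨l, weak_before, strict_at⟩
    exact ⟨Fin.castLE hk l, l.isLt,
      fun i hi => weak_before ⟨i, (Fin.lt_def.1 hi).trans l.isLt⟩ hi, strict_at⟩
  · rintro ⟨l, hl, weak_before, strict_at⟩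
    exact ⟨⟨l, hl⟩, fun i hi => weak_before (Fin.castLE hk i) hi, strict_at⟩

theorem nlexGE_truncVec_iff (hk : k ≤ D) :
    nlexGE (truncVec m k hk a) (truncVec m k hk b) ↔ nlexGETrunc k a b :=
  or_congr (nlexGT_truncVec_iff hk)
    ⟨fun h i hi => h ⟨i, hi⟩, fun h i => h (Fin.castLE hk i) i.isLt⟩

theorem nlexGTTrunc.nlexGETrunc (h : nlexGTTrunc q a b) (k : ℕ) : nlexGETrunc k a b := by
  obtain ⟨l, -, weak_before, strict_at⟩ := h
  rcases lt_or_ge (l : ℕ) k with hlk | hkl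
  · exact Or.inl ⟨l, hlk, weak_before, strict_at⟩
  · exact Or.inr fun i hi => weak_before i (hi.trans_le hkl)

theorem nlexGETrunc.mono (h : nlexGETrunc q a b) (hkq : k ≤ q) : nlexGETrunc k a b :=
  h.elim (fun strict => strict.nlexGETrunc k)
    fun weak => Or.inr fun i hi => weak i (hi.trans_le hkq)

end Orderings

section Supermartingales

variable {F : Kernel S S} {p : S → ℕ} {D : ℕ} {m : Fin D → ℕ} {r : S → ∀ i, Fin (m i) → ℝ≥0∞}

theorem nextTimeN_truncVec {k : ℕ} (hk : k ≤ D) (x : S) :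
    nextTimeN F (fun y => truncVec m k hk (r y)) x = truncVec m k hk (nextTimeN F r x) :=
  rfl

theorem IsLexPMSM.nlexGETrunc (hr : IsLexPMSM F p r) (x : S) :
    nlexGETrunc (p x) (r x) (nextTimeN F r x) := by
  obtain ⟨-, -, weak_of_even, strict_of_odd⟩ := hr
  by_cases hx : Even (p x)
  · exact weak_of_even x hx
  · exact (strict_of_odd x hx).nlexGETrunc (p x)

theorem LexPMSM_truncation_is_LexGSSM_general (hr : IsLexPMSM F p r) {k : ℕ} (hk : Odd k)
    (hkD : k ≤ D) :
    IsLexGSSMBlocks F {x | p x ≤ k} {x | p x ≤ k - 1} (fun x => truncVec m k hkD (r x)) := by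
  have weak := hr.nlexGETrunc
  obtain ⟨measurable_r, r_ne_top, -, strict_of_odd⟩ := hr
  refine ⟨fun i => measurable_r (Fin.castLE hkD i), fun x i => r_ne_top x (Fin.castLE hkD i),
    fun x hx => ?_, fun x hx => ?_⟩
  · obtain ⟨hle : p x ≤ k, hgt : ¬ p x ≤ k - 1⟩ := hx
    have hpx : p x = k := by omega
    rw [nextTimeN_truncVec, nlexGT_truncVec_iff, ← hpx]
    exact strict_of_odd x (Nat.not_even_iff_odd.2 (hpx ▸ hk))
  · have hkp : k ≤ p x := (not_le.1 fun hle => hx (Or.inl hle)).le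
    rw [nextTimeN_truncVec, nlexGE_truncVec_iff]
    exact (weak x).mono hkp

end Supermartingales

/-- For a LexPMSM `r = (r₁,…,r_{2d})` for `(F, p)` with priorities in `{1,…,2d}`,
each truncation `(r₁,…,r_{2i−1})` is a LexGSSM for the Streett pair
`(S_{≤2i−1}, S_{≤2i−2})`, where `S_{≤k} = {x | p x ≤ k}`. -/
theorem LexPMSM_truncation_is_LexGSSM
    (F : Kernel S S) [IsMarkovKernel F]
    (d : ℕ) (p : S → ℕ) (hpm : Measurable p) (hp : ∀ x, 1 ≤ p x ∧ p x ≤ 2 * d)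
    (m : Fin (2 * d) → ℕ) (hm : ∀ i, 0 < m i)
    (r : S → ∀ i, Fin (m i) → ℝ≥0∞) (hr : IsLexPMSM F p r) :
    ∀ i : ℕ, 1 ≤ i → ∀ (hi : i ≤ d),
      IsLexGSSMBlocks F {x | p x ≤ 2 * i - 1} {x | p x ≤ 2 * i - 2}
        (fun x => truncVec m (2 * i - 1) (by omega) (r x)) := by
  exact fun i h1 hi => LexPMSM_truncation_is_LexGSSM_general hr
    (Nat.Even.sub_odd (by omega) (even_two_mul i) odd_one) (by omega)
end

section
/- Let F : S → G(S) be a Markov chain on a measurable space S and let p : S → {1,…,2d} be a measurable priority function. Suppose that for each i ∈ {1,…,d} there is a lexicographic generalised Streett supermartingale r_i : S → [0,∞)^{m_i} for the Streett pair (S_{≤2i−1}, S_{≤2i−2}), where S_{≤k} = {x ∈ S ∣ p(x) ≤ k}. Then r := (r₁,…,r_d) is a reduced lexicographic progress-measure supermartingale for (F, p): for each x ∈ S, r(x) ⪰⁽²⁾_{⌈p(x)/2⌉} (X r)(x) if p(x) is even, and r(x) ≻⁽²⁾_{⌈p(x)/2⌉} (X r)(x) if p(x) is odd. -/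
open MeasureTheory ProbabilityTheory Set
open scoped ENNReal NNReal

variable {S : Type*} [MeasurableSpace S]

/-- The next-time operator applied componentwise: `(𝕏 r)(s) = ∫ r dF(s)`. -/
noncomputable def nextTimeV (F : Kernel S S) {n : ℕ} (r : S → Fin n → ℝ≥0∞) :
    S → Fin n → ℝ≥0∞ :=
  fun s i => ∫⁻ y, r y i ∂(F s)

/-- A lexicographic generalised Streett supermartingale (LexGSSM) for `(F, A, B)`:
`(𝕏 r)(x) ≺ r(x)` on `A ∖ B` and `(𝕏 r)(x) ⪯ r(x)` outside `A ∪ B`. -/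
def IsLexGSSM (F : Kernel S S) (A B : Set S) {n : ℕ} (r : S → Fin n → ℝ≥0∞) : Prop :=
  (∀ i, Measurable fun x => r x i) ∧ (∀ x i, r x i ≠ ⊤) ∧
    (∀ x ∈ A \ B, lexGT (r x) (nextTimeV F r x)) ∧
    (∀ x ∉ A ∪ B, lexGE (r x) (nextTimeV F r x))

/-- The condition on next-time values that makes `r` a reduced lexicographic progress-measure
supermartingale (LexPMSM) for `(F, p)`; measurability and finiteness of `r` are not part of it.
The index `(p x + 1) / 2` is `⌈p(x)/2⌉`, the number of blocks compared at `x`. -/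
def IsReducedLexPMSM (F : Kernel S S) (p : S → ℕ) {d : ℕ} {m : Fin d → ℕ}
    (r : S → ∀ i, Fin (m i) → ℝ≥0∞) : Prop :=
  ∀ x : S,
    (Even (p x) → nlexGETrunc ((p x + 1) / 2) (r x) (nextTimeN F r x)) ∧
    (¬ Even (p x) → nlexGTTrunc ((p x + 1) / 2) (r x) (nextTimeN F r x))

namespace IsLexGSSM

variable {F : Kernel S S} {α : Type*} [Preorder α] {p : S → α} {a b : α} {n : ℕ}
  {r : S → Fin n → ℝ≥0∞} {x : S}

theorem lexGT_of_lt_of_le (hr : IsLexGSSM F {x | p x ≤ b} {x | p x ≤ a} r)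
    (hax : a < p x) (hxb : p x ≤ b) : lexGT (r x) (nextTimeV F r x) := by
  obtain ⟨-, -, decrease, -⟩ := hr
  exact decrease x ⟨hxb, hax.not_ge⟩

theorem lexGE_of_lt_of_lt (hr : IsLexGSSM F {x | p x ≤ b} {x | p x ≤ a} r)
    (hax : a < p x) (hbx : b < p x) : lexGE (r x) (nextTimeV F r x) := by
  obtain ⟨-, -, -, nonincrease⟩ := hr
  exact nonincrease x (not_or_intro hbx.not_ge hax.not_ge)

end IsLexGSSM

section Priority

variable {F : Kernel S S} {p : S → ℕ} {d : ℕ} {m : Fin d → ℕ}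
  {r : S → ∀ i : Fin d, Fin (m i) → ℝ≥0∞} {x : S}

theorem lexGE_nextTimeN_of_lt {i : Fin d}
    (hr : IsLexGSSM F {x | p x ≤ 2 * (i : ℕ) + 1} {x | p x ≤ 2 * (i : ℕ)} (fun x => r x i))
    (hx : 2 * (i : ℕ) + 1 < p x) : lexGE (r x i) (nextTimeN F r x i) :=
  hr.lexGE_of_lt_of_lt (Nat.lt_of_succ_lt hx) hx

theorem nlexGETrunc_nextTimeN_of_eq_two_mul
    (hr : ∀ i : Fin d,
      IsLexGSSM F {x | p x ≤ 2 * (i : ℕ) + 1} {x | p x ≤ 2 * (i : ℕ)} (fun x => r x i))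
    {k : ℕ} (hx : p x = 2 * k) : nlexGETrunc k (r x) (nextTimeN F r x) :=
  Or.inr fun i hi => lexGE_nextTimeN_of_lt (hr i) (by omega)

theorem nlexGTTrunc_nextTimeN_of_eq_two_mul_add_one
    (hr : ∀ i : Fin d,
      IsLexGSSM F {x | p x ≤ 2 * (i : ℕ) + 1} {x | p x ≤ 2 * (i : ℕ)} (fun x => r x i))
    {l : Fin d} (hx : p x = 2 * (l : ℕ) + 1) :
    nlexGTTrunc ((l : ℕ) + 1) (r x) (nextTimeN F r x) := by
  have earlier_blocks : ∀ i < l, lexGE (r x i) (nextTimeN F r x i) :=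
    fun i hi => lexGE_nextTimeN_of_lt (hr i) (by omega)
  have block_l : lexGT (r x l) (nextTimeN F r x l) :=
    (hr l).lexGT_of_lt_of_le (by omega) hx.le
  exact ⟨l, Nat.lt_succ_self l, earlier_blocks, block_l⟩

theorem LexGSSMs_give_reduced_LexPMSM_general (hp : ∀ x, p x ≤ 2 * d)
    (hr : ∀ i : Fin d,
      IsLexGSSM F {x | p x ≤ 2 * (i : ℕ) + 1} {x | p x ≤ 2 * (i : ℕ)} (fun x => r x i)) :
    IsReducedLexPMSM F p r := by
  refine fun x => ⟨fun heven => ?_, fun hodd => ?_⟩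
  · obtain ⟨k, hk⟩ := even_iff_exists_two_mul.mp heven
    have ceil_half : (p x + 1) / 2 = k := by omega
    rw [ceil_half]
    exact nlexGETrunc_nextTimeN_of_eq_two_mul hr hk
  · obtain ⟨k, hk⟩ := Nat.not_even_iff_odd.mp hodd
    have hkd : k < d := by have := hp x; omega
    have ceil_half : (p x + 1) / 2 = k + 1 := by omega
    rw [ceil_half]
    exact nlexGTTrunc_nextTimeN_of_eq_two_mul_add_one hr (l := ⟨k, hkd⟩) hk

end Priority

/-- If for each `i ∈ {1,…,d}` the `i`-th component `r_i : S → [0,∞)^{m_i}` of `r`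
is a LexGSSM for the Streett pair `(S_{≤2i−1}, S_{≤2i−2})` (where
`S_{≤k} = {x | p x ≤ k}`), then `r = (r₁,…,r_d)` is a reduced lexicographic
progress-measure supermartingale for `(F, p)`: for each `x`,
`r(x) ⪰⁽²⁾_{⌈p(x)/2⌉} (𝕏 r)(x)` if `p(x)` is even and
`r(x) ≻⁽²⁾_{⌈p(x)/2⌉} (𝕏 r)(x)` if `p(x)` is odd. -/
theorem LexGSSMs_give_reduced_LexPMSM
    (F : Kernel S S) [IsMarkovKernel F]
    (d : ℕ) (p : S → ℕ) (hpm : Measurable p) (hp : ∀ x, 1 ≤ p x ∧ p x ≤ 2 * d)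
    (m : Fin d → ℕ) (hm : ∀ i, 0 < m i)
    (r : S → ∀ i : Fin d, Fin (m i) → ℝ≥0∞)
    (hr : ∀ i : Fin d,
      IsLexGSSM F {x | p x ≤ 2 * (i : ℕ) + 1} {x | p x ≤ 2 * (i : ℕ)}
        (fun x => r x i)) :
    ∀ x : S,
      (Even (p x) → nlexGETrunc ((p x + 1) / 2) (r x) (nextTimeN F r x)) ∧
      (¬ Even (p x) → nlexGTTrunc ((p x + 1) / 2) (r x) (nextTimeN F r x)) :=
  LexGSSMs_give_reduced_LexPMSM_general (fun x => (hp x).2) hr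
end
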